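/- For every δ > 0 there exists g ∈ A₁ with g(0) > 0 and ĝ compactly supported such that ρ₁(g)/g(0) ≤ C₁ + δ; that is, the infimum defining C₁ is unchanged if it is restricted to the subclass A₁^{BL} ⊂ A₁ of functions whose Fourier transform has compact support. -/

import Mathlib

open MeasureTheory Filter
open scoped Classical

noncomputable section

/-- The Fourier transform `ĝ(α) = ∫ g(x) e^{-2πiαx} dx` of a real-valued function. -/
def fourierT (g : ℝ → ℝ) (α : ℝ) : ℂ :=
  ∫ x : ℝ, (g x : ℂ) * Complex.exp (-(2 * Real.pi * α * x : ℝ) * Complex.I)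

/-- The class `A₁` of continuous, even, non-negative functions `g ∈ L¹(ℝ)`
with `ĝ(α) ≤ 0` for `|α| ≥ 1` (such `ĝ` is real-valued since `g` is even and real). -/
def memA1 (g : ℝ → ℝ) : Prop :=
  Continuous g ∧ (∀ x, g (-x) = g x) ∧ (∀ x, 0 ≤ g x) ∧ MeasureTheory.Integrable g ∧
    ∀ α : ℝ, 1 ≤ |α| → (fourierT g α).re ≤ 0

/-- The functional `ρ₁(g) = ĝ(0) + ∫_{-1}^{1} ĝ(α)|α| dα`. -/
def rho1 (g : ℝ → ℝ) : ℝ :=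
  (fourierT g 0).re + ∫ α in (-1 : ℝ)..1, (fourierT g α).re * |α|

/-- The constant `C₁ = inf ρ₁(g)/g(0)` over nonzero `g ∈ A₁` with `g(0) > 0`. -/
def C1 : ℝ :=
  sInf {c : ℝ | ∃ g : ℝ → ℝ, memA1 g ∧ g ≠ 0 ∧ 0 < g 0 ∧ c = rho1 g / g 0}

/-!
Let `k` be a Schwartz probability density with `k̂` nonnegative and supported in `[-1, 1]`, and put
`k_R(x) = R k(R x)`. If `g ∈ A₁`, then `g ⋆ k_R` has transform `ĝ(α) k̂(α / R)`, which is compactly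
supported and nowhere of the opposite sign to `ĝ`, so `g ⋆ k_R ∈ A₁`. As `R → ∞`,
`(g ⋆ k_R)(0) → g(0)` because `k_R` is an approximate identity, and `ρ₁(g ⋆ k_R) → ρ₁(g)` by
dominated convergence, because `k̂(0) = 1`. Apply this to a `g` whose ratio is close to `C₁`.

To obtain `k`, normalise `|f̂|²` for a bump function `f ≥ 0` supported in `[-1/2, 1/2]`: by Fourier
inversion its transform is the reflected autocorrelation of `f`.
-/

open FourierTransform Bornology
open scoped Convolution SchwartzMap Topology

lemma convolution_nonneg {G : Type*} [Sub G] [MeasurableSpace G] {μ : Measure G} {f g : G → ℝ}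
    (hf : ∀ x, 0 ≤ f x) (hg : ∀ x, 0 ≤ g x) (x : G) :
    0 ≤ (f ⋆[ContinuousLinearMap.lsmul ℝ ℝ, μ] g) x :=
  integral_nonneg fun t ↦ mul_nonneg (hf t) (hg (x - t))

section SchwartzFunction

variable {E F : Type*} [NormedAddCommGroup E] [NormedSpace ℝ E] [NormedAddCommGroup F]
  [NormedSpace ℝ F]

lemma bddAbove_range_norm_schwartzMap (f : 𝓢(E, F)) :
    BddAbove (Set.range fun x ↦ ‖f x‖) :=
  f.toBoundedContinuousFunction.bddAbove_range_norm_comp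

lemma tendsto_norm_pow_mul_norm_schwartzMap_cobounded (f : 𝓢(E, F)) (n : ℕ) :
    Tendsto (fun x ↦ ‖x‖ ^ n * ‖f x‖) (cobounded E) (𝓝 0) := by
  obtain ⟨C, -, hC⟩ := f.decay (n + 1) 0
  refine squeeze_zero' (.of_forall fun x ↦ by positivity) ?_
    (tendsto_const_nhds (x := C).div_atTop tendsto_norm_cobounded_atTop)
  filter_upwards [tendsto_norm_cobounded_atTop.eventually_gt_atTop 0] with x hx
  rw [le_div_iff₀ hx]
  calc ‖x‖ ^ n * ‖f x‖ * ‖x‖ = ‖x‖ ^ (n + 1) * ‖f x‖ := by ring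
    _ ≤ C := by simpa only [norm_iteratedFDeriv_zero] using hC x

end SchwartzFunction

section FourierT

variable (g k : ℝ → ℝ) (α : ℝ)

lemma fourierT_eq_fourier : fourierT g = 𝓕 (fun x ↦ (g x : ℂ)) := by
  ext α
  rw [Real.fourier_real_eq_integral_exp_smul, fourierT]
  congr 1 with x
  rw [smul_eq_mul, mul_comm]
  congr 2
  push_cast
  ring

lemma fourierT_zero : fourierT g 0 = ((∫ x, g x : ℝ) : ℂ) := by
  simp [fourierT, integral_complex_ofReal]

lemma fourierT_neg_eq_conj : fourierT g (-α) = (starRingEnd ℂ) (fourierT g α) := by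
  unfold fourierT
  rw [← integral_conj]
  congr 1 with x
  rw [map_mul, Complex.conj_ofReal, ← Complex.exp_conj, map_mul, Complex.conj_I,
    map_neg, Complex.conj_ofReal]
  congr 2
  push_cast
  ring

lemma fourierT_comp_neg : fourierT (fun x ↦ g (-x)) α = fourierT g (-α) := by
  unfold fourierT
  rw [← integral_neg_eq_self]
  simp

variable {g} in
lemma im_fourierT_of_even (hg : g.Even) : (fourierT g α).im = 0 := by
  have hreflect : (fun x ↦ g (-x)) = g := funext hg
  rw [← Complex.conj_eq_iff_im, ← fourierT_neg_eq_conj, ← fourierT_comp_neg, hreflect]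

lemma fourierT_const_mul (c : ℝ) : fourierT (fun x ↦ c * g x) α = c * fourierT g α := by
  simp only [fourierT, Complex.ofReal_mul, mul_assoc, integral_const_mul]

lemma fourierT_comp_mul_left {a : ℝ} (ha : a ≠ 0) :
    fourierT (fun x ↦ g (a * x)) α = (|a⁻¹| : ℝ) * fourierT g (α / a) := by
  unfold fourierT
  rw [← Complex.real_smul, ← Measure.integral_comp_mul_left]
  congr 1 with x
  rw [show 2 * Real.pi * (α / a) * (a * x) = 2 * Real.pi * α * x by field_simp]

lemma norm_fourierT_le : ‖fourierT g α‖ ≤ ∫ x, |g x| := by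
  rw [fourierT_eq_fourier]
  refine (VectorFourier.norm_fourierIntegral_le_integral_norm ..).trans_eq ?_
  simp only [Complex.norm_real, Real.norm_eq_abs]

variable {g k}

lemma continuous_fourierT (hg : Integrable g) : Continuous (fourierT g) := by
  rw [fourierT_eq_fourier]
  exact VectorFourier.fourierIntegral_continuous Real.continuous_fourierChar
    continuous_inner hg.ofReal

lemma fourierT_convolution (hg : Integrable g) (hk : Integrable k) :
    fourierT (g ⋆ k) α = fourierT g α * fourierT k α := by
  have hcoe : (fun x ↦ ((g ⋆ k) x : ℂ)) =
      (fun x ↦ (g x : ℂ)) ⋆[ContinuousLinearMap.mul ℂ ℂ] fun x ↦ (k x : ℂ) := by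
    ext x
    simp [convolution, ← integral_complex_ofReal]
  simp only [fourierT_eq_fourier, hcoe]
  exact Real.fourier_mul_convolution_eq hg.ofReal hk.ofReal α

end FourierT

section Mollifier

/-- Kernels regular and positive enough for convolution with them to preserve `A₁`. The condition
`k̂ ≥ 0` is imposed on the real part only, since `k̂` is real for even `k`. -/
structure IsA1Mollifier (k : ℝ → ℝ) : Prop where
  continuous : Continuous k
  bddAbove_norm : BddAbove (Set.range fun x ↦ ‖k x‖)
  even : k.Even
  nonneg : ∀ x, 0 ≤ k x
  integrable : Integrable k
  re_fourierT_nonneg : ∀ α, 0 ≤ (fourierT k α).re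

variable {g k : ℝ → ℝ}

lemma IsA1Mollifier.const_mul (hk : IsA1Mollifier k) {c : ℝ} (hc : 0 ≤ c) :
    IsA1Mollifier fun x ↦ c * k x where
  continuous := hk.continuous.const_mul c
  bddAbove_norm := by
    obtain ⟨M, hM⟩ := hk.bddAbove_norm
    refine ⟨‖c‖ * M, ?_⟩
    rintro _ ⟨x, rfl⟩
    simp only [norm_mul]
    exact mul_le_mul_of_nonneg_left (hM ⟨x, rfl⟩) (norm_nonneg c)
  even x := congrArg (c * ·) (hk.even x)
  nonneg x := mul_nonneg hc (hk.nonneg x)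
  integrable := hk.integrable.const_mul c
  re_fourierT_nonneg α := by
    rw [fourierT_const_mul, Complex.re_ofReal_mul]
    exact mul_nonneg hc (hk.re_fourierT_nonneg α)

lemma IsA1Mollifier.comp_mul_left (hk : IsA1Mollifier k) {a : ℝ} (ha : a ≠ 0) :
    IsA1Mollifier fun x ↦ k (a * x) where
  continuous := hk.continuous.comp (continuous_const_mul a)
  bddAbove_norm := hk.bddAbove_norm.mono (Set.range_comp_subset_range (a * ·) fun x ↦ ‖k x‖)
  even x := (congrArg k (mul_neg a x)).trans (hk.even _)
  nonneg x := hk.nonneg (a * x)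
  integrable := hk.integrable.comp_mul_left' ha
  re_fourierT_nonneg α := by
    rw [fourierT_comp_mul_left k α ha, Complex.re_ofReal_mul]
    exact mul_nonneg (abs_nonneg _) (hk.re_fourierT_nonneg _)

lemma memA1.convolution (hg : memA1 g) (hk : IsA1Mollifier k) : memA1 (g ⋆ k) := by
  obtain ⟨-, hg_even, hg_nonneg, hg_int, hg_fourier⟩ := hg
  refine ⟨hk.bddAbove_norm.continuous_convolution_right_of_integrable _ hg_int hk.continuous,
    fun x ↦ convolution_neg_of_neg_eq _ (.of_forall hg_even) (.of_forall hk.even),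
    convolution_nonneg hg_nonneg hk.nonneg, hg_int.integrable_convolution _ hk.integrable,
    fun α hα ↦ ?_⟩
  rw [fourierT_convolution α hg_int hk.integrable, Complex.mul_re, im_fourierT_of_even α hk.even,
    mul_zero, sub_zero]
  exact mul_nonpos_of_nonpos_of_nonneg (hg_fourier α hα) (hk.re_fourierT_nonneg α)

lemma IsA1Mollifier.memA1_of_support_subset (hk : IsA1Mollifier k)
    (hsupp : Function.support (fourierT k) ⊆ Metric.ball 0 1) : memA1 k := by
  refine ⟨hk.continuous, hk.even, hk.nonneg, hk.integrable, fun α hα ↦ ?_⟩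
  have hα_notMem : α ∉ Metric.ball (0 : ℝ) 1 := by simpa using hα
  rw [Function.notMem_support.1 fun h ↦ hα_notMem (hsupp h), Complex.zero_re]

end Mollifier

section Dilation

/-- The dilation `x ↦ R k(R x)`, normalised to preserve the integral for `R > 0`. As `R → ∞` it
turns a probability density into an approximate identity. -/
def dilate (k : ℝ → ℝ) (R : ℝ) : ℝ → ℝ := fun x ↦ R * k (R * x)

variable {g k : ℝ → ℝ} {R : ℝ}

lemma IsA1Mollifier.dilate (hk : IsA1Mollifier k) (hR : 0 < R) : IsA1Mollifier (dilate k R) :=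
  (hk.comp_mul_left hR.ne').const_mul hR.le

lemma fourierT_dilate (k : ℝ → ℝ) (hR : 0 < R) (α : ℝ) :
    fourierT (dilate k R) α = fourierT k (α / R) := by
  have hscale : (R : ℂ) * ((|R⁻¹| : ℝ) : ℂ) = 1 := by
    rw [abs_of_pos (inv_pos.2 hR), ← Complex.ofReal_mul, mul_inv_cancel₀ hR.ne', Complex.ofReal_one]
  unfold dilate
  rw [fourierT_const_mul, fourierT_comp_mul_left k α hR.ne', ← mul_assoc, hscale, one_mul]

lemma integrable_dilate (hk : Integrable k) (hR : R ≠ 0) : Integrable (dilate k R) :=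
  (hk.comp_mul_left' hR).const_mul R

lemma fourierT_convolution_dilate (hg : Integrable g) (hk : Integrable k) (hR : 0 < R) (α : ℝ) :
    fourierT (g ⋆ dilate k R) α = fourierT g α * fourierT k (α / R) := by
  rw [fourierT_convolution α hg (integrable_dilate hk hR.ne'), fourierT_dilate k hR]

lemma hasCompactSupport_fourierT_convolution_dilate (hg : Integrable g) (hk : Integrable k)
    (hsupp : HasCompactSupport (fourierT k)) (hR : 0 < R) :
    HasCompactSupport (fourierT (g ⋆ dilate k R)) := by
  have hfourier : fourierT (g ⋆ dilate k R) = fourierT g * fun α ↦ fourierT k (R⁻¹ • α) := by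
    ext α
    rw [fourierT_convolution_dilate hg hk hR, Pi.mul_apply, smul_eq_mul, div_eq_inv_mul]
  rw [hfourier]
  exact (hsupp.comp_smul (inv_ne_zero hR.ne')).mul_left

lemma tendsto_convolution_dilate (hk_nonneg : ∀ x, 0 ≤ k x) (hk_integral : ∫ x, k x = 1)
    (hk_decay : Tendsto (fun x ↦ ‖x‖ * k x) (cobounded ℝ) (𝓝 0)) (hg : Integrable g) {x : ℝ}
    (hgx : ContinuousAt g x) : Tendsto (fun R ↦ (g ⋆ dilate k R) x) atTop (𝓝 (g x)) := by
  have hpeak := tendsto_integral_comp_smul_smul_of_integrable' (μ := volume) hk_nonneg hk_integral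
    (by simpa using hk_decay) hg hgx
  refine hpeak.congr fun R ↦ integral_congr_ae (.of_forall fun t ↦ ?_)
  simp [dilate, mul_comm]

lemma tendsto_fourierT_convolution_dilate (hg : Integrable g) (hk : Integrable k)
    (hk_integral : ∫ x, k x = 1) (α : ℝ) :
    Tendsto (fun R ↦ fourierT (g ⋆ dilate k R) α) atTop (𝓝 (fourierT g α)) := by
  have hk_fourier : Tendsto (fun R ↦ fourierT k (α / R)) atTop (𝓝 1) := by
    have hzero : fourierT k 0 = 1 := by rw [fourierT_zero, hk_integral, Complex.ofReal_one]
    rw [← hzero]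
    exact ((continuous_fourierT hk).tendsto 0).comp (tendsto_const_nhds.div_atTop tendsto_id)
  have hmul := hk_fourier.const_mul (fourierT g α)
  rw [mul_one] at hmul
  refine hmul.congr' ?_
  filter_upwards [eventually_gt_atTop 0] with R hR
  rw [fourierT_convolution_dilate hg hk hR]

lemma tendsto_rho1 {ι : Type*} {l : Filter ι} [l.IsCountablyGenerated] {f : ι → ℝ → ℝ} {M : ℝ}
    (hf : ∀ᶠ i in l, Integrable (f i)) (hbound : ∀ᶠ i in l, ∀ α, ‖fourierT (f i) α‖ ≤ M)
    (hlim : ∀ α, Tendsto (fun i ↦ fourierT (f i) α) l (𝓝 (fourierT g α))) :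
    Tendsto (fun i ↦ rho1 (f i)) l (𝓝 (rho1 g)) := by
  have hlim_re (α : ℝ) : Tendsto (fun i ↦ (fourierT (f i) α).re) l (𝓝 (fourierT g α).re) :=
    (Complex.continuous_re.tendsto _).comp (hlim α)
  refine (hlim_re 0).add (intervalIntegral.tendsto_integral_filter_of_dominated_convergence
    (fun α ↦ M * |α|) ?_ ?_ ?_ ?_)
  · filter_upwards [hf] with i hi
    exact ((Complex.continuous_re.comp (continuous_fourierT hi)).mul
      continuous_abs).aestronglyMeasurable
  · filter_upwards [hbound] with i hi
    refine .of_forall fun α _ ↦ ?_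
    rw [norm_mul, Real.norm_eq_abs, Real.norm_eq_abs, abs_abs]
    exact mul_le_mul_of_nonneg_right ((Complex.abs_re_le_norm _).trans (hi α)) (abs_nonneg α)
  · exact (continuous_const.mul continuous_abs).intervalIntegrable _ _
  · exact .of_forall fun α _ ↦ (hlim_re α).mul_const |α|

lemma tendsto_rho1_convolution_dilate (hg : Integrable g) (hk : Integrable k)
    (hk_integral : ∫ x, k x = 1) :
    Tendsto (fun R ↦ rho1 (g ⋆ dilate k R)) atTop (𝓝 (rho1 g)) := by
  refine tendsto_rho1 (M := (∫ x, |g x|) * ∫ x, |k x|) ?_ ?_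
    (tendsto_fourierT_convolution_dilate hg hk hk_integral)
  · filter_upwards [eventually_ne_atTop 0] with R hR
    exact hg.integrable_convolution _ (integrable_dilate hk hR)
  · filter_upwards [eventually_gt_atTop 0] with R hR α
    rw [fourierT_convolution_dilate hg hk hR, norm_mul]
    gcongr
    exacts [norm_fourierT_le g α, norm_fourierT_le k (α / R)]

end Dilation

section PowerSpectrum

/-- The autocorrelation `x ↦ ∫ f(t) f(t - x) dt`, written as the convolution of `f` with its
reflection. -/
def autocorrelation (f : ℝ → ℝ) : ℝ → ℝ := f ⋆ fun x ↦ f (-x)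

lemma fourierT_autocorrelation {f : ℝ → ℝ} (hf : Integrable f) (α : ℝ) :
    fourierT (autocorrelation f) α = ((‖fourierT f α‖ ^ 2 : ℝ) : ℂ) := by
  rw [autocorrelation, fourierT_convolution α hf hf.comp_neg, fourierT_comp_neg,
    fourierT_neg_eq_conj, Complex.mul_conj', Complex.ofReal_pow]

lemma fourierT_norm_fourierT_sq {f : ℝ → ℝ} {α : ℝ} (hf : Integrable f)
    (hsq : Integrable fun x ↦ ‖fourierT f x‖ ^ 2)
    (hcont : ContinuousAt (autocorrelation f) (-α)) :
    fourierT (fun x ↦ ‖fourierT f x‖ ^ 2) α = autocorrelation f (-α) := by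
  have hfourier : 𝓕 (fun x ↦ (autocorrelation f x : ℂ)) =
      fun x ↦ ((‖fourierT f x‖ ^ 2 : ℝ) : ℂ) := by
    rw [← fourierT_eq_fourier]
    exact funext (fourierT_autocorrelation hf)
  have hint : Integrable fun x ↦ (autocorrelation f x : ℂ) :=
    (hf.integrable_convolution _ hf.comp_neg).ofReal
  have hinversion := hint.fourierInv_fourier_eq (hfourier ▸ hsq.ofReal)
    (Complex.continuous_ofReal.continuousAt.comp hcont)
  rwa [hfourier, Real.fourierInv_eq_fourier_neg, neg_neg, ← fourierT_eq_fourier] at hinversion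

/-- The power spectrum `‖f̂‖²` of a real Schwartz function, as a Schwartz function. -/
def powerSpectrum (f : 𝓢(ℝ, ℝ)) : 𝓢(ℝ, ℝ) :=
  let F : 𝓢(ℝ, ℂ) := 𝓕 (f.postcompCLM Complex.ofRealCLM)
  SchwartzMap.pairing (innerSL ℝ) F F

lemma powerSpectrum_apply (f : 𝓢(ℝ, ℝ)) (x : ℝ) : powerSpectrum f x = ‖fourierT f x‖ ^ 2 := by
  rw [powerSpectrum, SchwartzMap.pairing_apply_apply, innerSL_apply_apply,
    real_inner_self_eq_norm_sq, fourierT_eq_fourier]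
  rfl

lemma fourierT_powerSpectrum (f : 𝓢(ℝ, ℝ)) (α : ℝ) :
    fourierT (powerSpectrum f) α = autocorrelation f (-α) := by
  have hcont : Continuous (autocorrelation f) :=
    BddAbove.continuous_convolution_right_of_integrable _
      ((bddAbove_range_norm_schwartzMap f).mono
        (Set.range_comp_subset_range Neg.neg fun x ↦ ‖f x‖))
      f.integrable (f.continuous.comp continuous_neg)
  rw [← fourierT_norm_fourierT_sq f.integrable _ hcont.continuousAt]
  · exact congrArg (fourierT · α) (funext (powerSpectrum_apply f))
  · exact (powerSpectrum f).integrable.congr (.of_forall (powerSpectrum_apply f))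

lemma isA1Mollifier_powerSpectrum {f : 𝓢(ℝ, ℝ)} (hf : ∀ x, 0 ≤ f x) :
    IsA1Mollifier (powerSpectrum f) where
  continuous := (powerSpectrum f).continuous
  bddAbove_norm := bddAbove_range_norm_schwartzMap _
  even x := by
    rw [powerSpectrum_apply, powerSpectrum_apply, fourierT_neg_eq_conj, RCLike.norm_conj]
  nonneg x := by
    rw [powerSpectrum_apply]
    positivity
  integrable := (powerSpectrum f).integrable
  re_fourierT_nonneg α := by
    rw [fourierT_powerSpectrum, Complex.ofReal_re]
    exact convolution_nonneg hf (fun x ↦ hf (-x)) _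

lemma support_fourierT_powerSpectrum_subset {f : 𝓢(ℝ, ℝ)} {r : ℝ} (hr : 0 < r)
    (hf : Function.support f ⊆ Metric.ball 0 r) :
    Function.support (fourierT (powerSpectrum f)) ⊆ Metric.ball 0 (r + r) := by
  have hreflect : Function.support (fun x ↦ f (-x)) ⊆ Metric.ball 0 r := fun x hx ↦ by
    simpa using hf hx
  have hauto : Function.support (autocorrelation f) ⊆ Metric.ball 0 (r + r) := by
    refine (support_convolution_subset _).trans ((Set.add_subset_add hf hreflect).trans ?_)
    rw [ball_add_ball hr hr, add_zero]
  intro α hα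
  have hα_neg : -α ∈ Metric.ball (0 : ℝ) (r + r) := hauto fun h ↦ hα <| by
    rw [fourierT_powerSpectrum, h, Complex.ofReal_zero]
  simpa using hα_neg

lemma exists_bandlimited_mollifier :
    ∃ k : 𝓢(ℝ, ℝ), IsA1Mollifier k ∧ ∫ x, k x = 1 ∧ 0 < k 0 ∧
      Function.support (fourierT k) ⊆ Metric.ball 0 1 := by
  let φ : ContDiffBump (0 : ℝ) := ⟨1 / 4, 1 / 2, by norm_num, by norm_num⟩
  let f : 𝓢(ℝ, ℝ) := φ.hasCompactSupport.toSchwartzMap φ.contDiff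
  have hK : IsA1Mollifier (powerSpectrum f) := isA1Mollifier_powerSpectrum fun _ ↦ φ.nonneg
  have hsupp : Function.support (fourierT (powerSpectrum f)) ⊆ Metric.ball 0 1 := by
    have hf : Function.support f ⊆ Metric.ball 0 (1 / 2) := φ.support_eq.subset
    simpa only [add_halves] using support_fourierT_powerSpectrum_subset one_half_pos hf
  have hzero : 0 < powerSpectrum f 0 := by
    rw [powerSpectrum_apply, fourierT_zero, Complex.norm_real, Real.norm_eq_abs, sq_abs]
    exact pow_pos φ.integral_pos 2
  have hint : 0 < ∫ x, powerSpectrum f x :=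
    integral_pos_of_integrable_nonneg_nonzero hK.continuous hK.integrable hK.nonneg hzero.ne'
  let c := (∫ x, powerSpectrum f x)⁻¹
  have hc : 0 < c := inv_pos.2 hint
  refine ⟨c • powerSpectrum f, hK.const_mul hc.le, ?_, mul_pos hc hzero,
    fun α hα ↦ hsupp fun h ↦ hα ?_⟩
  · exact (integral_const_mul c _).trans (inv_mul_cancel₀ hint.ne')
  · exact (fourierT_const_mul _ α c).trans (by rw [h, mul_zero])

end PowerSpectrum

lemma exists_bandlimited_memA1_rho1_div_lt {g : ℝ → ℝ} {c : ℝ} (hg : memA1 g) (hg0 : 0 < g 0)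
    (hc : rho1 g / g 0 < c) :
    ∃ G, memA1 G ∧ 0 < G 0 ∧ HasCompactSupport (fourierT G) ∧ rho1 G / G 0 < c := by
  have ⟨hg_cont, _, _, hg_int, _⟩ := hg
  obtain ⟨k, hk, hk_integral, -, hk_supp⟩ := exists_bandlimited_mollifier
  have hk_decay : Tendsto (fun x ↦ ‖x‖ * k x) (cobounded ℝ) (𝓝 0) := by
    simpa only [pow_one, Real.norm_of_nonneg (hk.nonneg _)] using
      tendsto_norm_pow_mul_norm_schwartzMap_cobounded k 1
  have hk_compact : HasCompactSupport (fourierT k) :=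
    .of_support_subset_isCompact (isCompact_closedBall 0 1)
      (hk_supp.trans Metric.ball_subset_closedBall)
  have hlim_zero : Tendsto (fun R ↦ (g ⋆ dilate k R) 0) atTop (𝓝 (g 0)) :=
    tendsto_convolution_dilate hk.nonneg hk_integral hk_decay hg_int hg_cont.continuousAt
  have hlim_ratio := (tendsto_rho1_convolution_dilate hg_int hk.integrable hk_integral).div
    hlim_zero hg0.ne'
  obtain ⟨R, hratio, hzero, hR⟩ := ((hlim_ratio.eventually_lt_const hc).and
    ((hlim_zero.eventually_const_lt hg0).and (eventually_gt_atTop 0))).exists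
  exact ⟨g ⋆ dilate k R, hg.convolution (hk.dilate hR), hzero,
    hasCompactSupport_fourierT_convolution_dilate hg_int hk.integrable hk_compact hR, hratio⟩

lemma exists_memA1_pos_at_zero : ∃ g, memA1 g ∧ 0 < g 0 := by
  obtain ⟨k, hk, -, hk0, hk_supp⟩ := exists_bandlimited_mollifier
  exact ⟨k, hk.memA1_of_support_subset hk_supp, hk0⟩

/-- For every `δ > 0` there exists a nonzero `g ∈ A₁` with `g(0) > 0` and `ĝ` compactly
supported such that `ρ₁(g)/g(0) ≤ C₁ + δ`: the infimum defining `C₁` is unchanged when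
restricted to the subclass of bandlimited functions. -/
theorem statement12 (δ : ℝ) (hδ : 0 < δ) :
    ∃ g : ℝ → ℝ, memA1 g ∧ g ≠ 0 ∧ 0 < g 0 ∧ HasCompactSupport (fourierT g) ∧
      rho1 g / g 0 ≤ C1 + δ := by
  have hne_zero {g : ℝ → ℝ} (hg : 0 < g 0) : g ≠ 0 := fun h ↦ hg.ne' (congrFun h 0)
  obtain ⟨g₀, hg₀, hg₀0⟩ := exists_memA1_pos_at_zero
  have hne : {c : ℝ | ∃ g, memA1 g ∧ g ≠ 0 ∧ 0 < g 0 ∧ c = rho1 g / g 0}.Nonempty :=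
    ⟨_, g₀, hg₀, hne_zero hg₀0, hg₀0, rfl⟩
  obtain ⟨_, ⟨g, hg, -, hg0, rfl⟩, hlt⟩ :=
    exists_lt_of_csInf_lt hne (lt_add_of_pos_right C1 hδ)
  obtain ⟨G, hG, hG0, hG_supp, hG_lt⟩ := exists_bandlimited_memA1_rho1_div_lt hg hg0 hlt
  exact ⟨G, hG, hne_zero hG0, hG0, hG_supp, hG_lt.le⟩

end
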